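/- Fix S ⊆ N, ν ∈ ℝ, and an initial state i ∈ N. For every feasible pair (x⁰, x¹) for i, Σ_j (R_j − ν) x¹_j = f_i^S − ν g_i^S − Σ_{j∈S} (r_j^S − ν w_j^S) x⁰_j + Σ_{j∉S} (r_j^S − ν w_j^S) x¹_j. (Proposition 3(c): decomposition of the ν-charge objective relative to the S-active policy.) -/

import Mathlib

open Matrix BigOperators
open scoped Classical

noncomputable section

/-- Transition matrix of the `S`-active policy: row `i` of `P` if `i ∈ S`,
the `i`-th standard unit row otherwise. -/
def PAct {N : Type*} [DecidableEq N] (P : Matrix N N ℝ) (S : Finset N) : Matrix N N ℝ :=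
  fun i j => if i ∈ S then P i j else if i = j then 1 else 0

/-- Transition matrix of the `Sᶜ`-active policy. -/
def PPas {N : Type*} [DecidableEq N] (P : Matrix N N ℝ) (S : Finset N) : Matrix N N ℝ :=
  fun i j => if i ∈ S then (if i = j then 1 else 0) else P i j

/-- Basis matrix `B^S = I - β P^S`. -/
def BMat {N : Type*} [Fintype N] [DecidableEq N] (β : ℝ) (P : Matrix N N ℝ) (S : Finset N) :
    Matrix N N ℝ := 1 - β • PAct P S

/-- Non-basic matrix `N^S = I - β P^{Sᶜ}`. -/
def NMat {N : Type*} [Fintype N] [DecidableEq N] (β : ℝ) (P : Matrix N N ℝ) (S : Finset N) :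
    Matrix N N ℝ := 1 - β • PPas P S

/-- Basis inverse `H^S = (B^S)⁻¹`. -/
def HMat {N : Type*} [Fintype N] [DecidableEq N] (β : ℝ) (P : Matrix N N ℝ) (S : Finset N) :
    Matrix N N ℝ := (BMat β P S)⁻¹

/-- Tableau matrix `A^S = N^S · H^S`. -/
def AMat {N : Type*} [Fintype N] [DecidableEq N] (β : ℝ) (P : Matrix N N ℝ) (S : Finset N) :
    Matrix N N ℝ := NMat β P S * HMat β P S

/-- Work measure `g^S = H^S · 1_S`. -/
def gWork {N : Type*} [Fintype N] [DecidableEq N] (β : ℝ) (P : Matrix N N ℝ) (S : Finset N) :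
    N → ℝ := (HMat β P S).mulVec (fun j => if j ∈ S then 1 else 0)

/-- Reward measure `f^S = H^S · (R·1_S)`. -/
def fRew {N : Type*} [Fintype N] [DecidableEq N] (β : ℝ) (P : Matrix N N ℝ) (R : N → ℝ)
    (S : Finset N) : N → ℝ := (HMat β P S).mulVec (fun j => if j ∈ S then R j else 0)

/-- Marginal work `w_i^S`. -/
def wMarg {N : Type*} [Fintype N] [DecidableEq N] (β : ℝ) (P : Matrix N N ℝ) (S : Finset N)
    (i : N) : ℝ :=
  if i ∈ S then (1 - β) * gWork β P S i
  else 1 + β * ∑ j ∈ S, P i j * gWork β P S j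

/-- Marginal reward `r_i^S`. -/
def rMarg {N : Type*} [Fintype N] [DecidableEq N] (β : ℝ) (P : Matrix N N ℝ) (R : N → ℝ)
    (S : Finset N) (i : N) : ℝ :=
  if i ∈ S then (1 - β) * fRew β P R S i
  else R i + β * ∑ j ∈ S, P i j * fRew β P R S j

/-- Marginal productivity rate `ν_i^S = r_i^S / w_i^S`. -/
def nuMarg {N : Type*} [Fintype N] [DecidableEq N] (β : ℝ) (P : Matrix N N ℝ) (R : N → ℝ)
    (S : Finset N) (i : N) : ℝ := rMarg β P R S i / wMarg β P S i

/-- Feasibility of a pair of row vectors `(x⁰, x¹)` for initial state `i`: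
`x⁰, x¹ ≥ 0` and `(1-β) x⁰ + x¹ (I - β P) = e_i`. -/
def Feasible {N : Type*} [Fintype N] [DecidableEq N] (β : ℝ) (P : Matrix N N ℝ) (i : N)
    (x0 x1 : N → ℝ) : Prop :=
  (∀ j, 0 ≤ x0 j) ∧ (∀ j, 0 ≤ x1 j) ∧
    (1 - β) • x0 + Matrix.vecMul x1 (1 - β • P) = Pi.single i 1

/-- Modified reward vector `R̂ = R - (I - βP)·Q`. -/
def Rhat {N : Type*} [Fintype N] [DecidableEq N] (β : ℝ) (P : Matrix N N ℝ) (R Q : N → ℝ) :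
    N → ℝ := fun i => R i - ((1 - β • P).mulVec Q) i

/-!
Fix `S` and write `f = f^S`, `r = r^S`. Since `P^S` is stochastic, `βP^S` has `ℓ^∞` operator norm
less than `1`, so `B^S` is invertible. The equation `B^S f = R·1_S` says that `f` vanishes off `S`
and that `(I - βP) f = R` on `S`. Comparing with the definition of `r` gives the two identities
`(1 - β) f = r·1_S` and `R - (I - βP) f = r·1_{Sᶜ}`. Pairing the balance equation
`(1 - β) x⁰ + x¹ (I - βP) = p` with `f` and substituting them yields
`x¹ R = p f - x⁰ (r·1_S) + x¹ (r·1_{Sᶜ})`. Work is the case `R = 1` of reward, so subtracting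
`ν` times the identity for `R = 1` gives the theorem.
-/

theorem ite_mem_dotProduct {n α : Type*} [Fintype n] [DecidableEq n] [NonUnitalNonAssocSemiring α]
    (T : Finset n) (r x : n → α) :
    (fun j => if j ∈ T then r j else 0) ⬝ᵥ x = ∑ j ∈ T, r j * x j := by
  simp only [dotProduct, ite_mul, zero_mul, Finset.sum_ite_mem, Finset.univ_inter]

section Stochastic

variable {n : Type*} [Fintype n] [DecidableEq n]

open scoped Matrix.Norms.Operator in
theorem linfty_opNorm_le_one_of_mem_rowStochastic {A : Matrix n n ℝ}
    (hA : A ∈ rowStochastic ℝ n) : ‖A‖ ≤ 1 := by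
  rw [linfty_opNorm_def, NNReal.coe_le_one, Finset.sup_le_iff]
  intro i _
  rw [← NNReal.coe_le_coe, NNReal.coe_sum, NNReal.coe_one, ← sum_row_of_mem_rowStochastic hA i]
  exact Finset.sum_le_sum fun j _ => (Real.norm_of_nonneg (nonneg_of_mem_rowStochastic hA)).le

open scoped Matrix.Norms.Operator in
theorem isUnit_one_sub_smul_of_mem_rowStochastic {A : Matrix n n ℝ} (hA : A ∈ rowStochastic ℝ n)
    {β : ℝ} (hβ : |β| < 1) : IsUnit (1 - β • A) := by
  refine isUnit_one_sub_of_norm_lt_one ?_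
  calc ‖β • A‖ = |β| * ‖A‖ := norm_smul β A
    _ ≤ |β| := mul_le_of_le_one_right (abs_nonneg β) (linfty_opNorm_le_one_of_mem_rowStochastic hA)
    _ < 1 := hβ

end Stochastic

section ActivePolicy

variable {N : Type*} [DecidableEq N] {β : ℝ} {P : Matrix N N ℝ} {S : Finset N} {j : N}

theorem PAct_row_of_mem (hj : j ∈ S) : PAct P S j = P j :=
  funext fun _ => if_pos hj

theorem PAct_row_of_notMem (hj : j ∉ S) : PAct P S j = (1 : Matrix N N ℝ) j :=
  funext fun _ => if_neg hj

variable [Fintype N]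

theorem PAct_mem_rowStochastic (hP : P ∈ rowStochastic ℝ N) (S : Finset N) :
    PAct P S ∈ rowStochastic ℝ N := by
  have hrow (i : N) : ∃ Q ∈ rowStochastic ℝ N, PAct P S i = Q i := by
    by_cases hi : i ∈ S
    · exact ⟨P, hP, PAct_row_of_mem hi⟩
    · exact ⟨1, one_mem _, PAct_row_of_notMem hi⟩
  refine mem_rowStochastic_iff_sum.2 ⟨fun i j => ?_, fun i => ?_⟩ <;> obtain ⟨Q, hQ, h⟩ := hrow i
  · exact h ▸ nonneg_of_mem_rowStochastic hQ
  · exact h ▸ sum_row_of_mem_rowStochastic hQ i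

theorem isUnit_BMat_of_mem_rowStochastic (hP : P ∈ rowStochastic ℝ N) (hβ : |β| < 1)
    (S : Finset N) : IsUnit (BMat β P S) :=
  isUnit_one_sub_smul_of_mem_rowStochastic (PAct_mem_rowStochastic hP S) hβ

theorem BMat_row_of_mem (hj : j ∈ S) : BMat β P S j = (1 - β • P) j :=
  funext fun k => by simp only [BMat, Matrix.sub_apply, Matrix.smul_apply, PAct_row_of_mem hj]

theorem BMat_row_of_notMem (hj : j ∉ S) : BMat β P S j = (1 - β) • (1 : Matrix N N ℝ) j :=
  funext fun k => by
    simp only [BMat, Matrix.sub_apply, Matrix.smul_apply, PAct_row_of_notMem hj, Pi.smul_apply,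
      smul_eq_mul]
    ring

theorem ne_one_of_isUnit_BMat (hB : IsUnit (BMat β P S)) (hj : j ∉ S) : β ≠ 1 := by
  rintro rfl
  have hrow : ∀ k, BMat 1 P S j k = 0 := fun k => by
    simp only [BMat_row_of_notMem hj, sub_self, zero_smul, Pi.zero_apply]
  exact ((isUnit_iff_isUnit_det _).1 hB).ne_zero (det_eq_zero_of_row_eq_zero j hrow)

variable {R : N → ℝ}

theorem BMat_mulVec_fRew (hB : IsUnit (BMat β P S)) :
    BMat β P S *ᵥ fRew β P R S = fun j => if j ∈ S then R j else 0 := by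
  rw [fRew, HMat, mulVec_mulVec, mul_nonsing_inv _ ((isUnit_iff_isUnit_det _).1 hB), one_mulVec]

theorem one_sub_smul_mulVec_fRew_of_mem (hB : IsUnit (BMat β P S)) (hj : j ∈ S) :
    ((1 - β • P) *ᵥ fRew β P R S) j = R j :=
  calc (1 - β • P) j ⬝ᵥ fRew β P R S
    _ = BMat β P S j ⬝ᵥ fRew β P R S := by rw [BMat_row_of_mem hj]
    _ = R j := (congrFun (BMat_mulVec_fRew hB) j).trans (if_pos hj)

theorem fRew_eq_zero_of_notMem (hB : IsUnit (BMat β P S)) (hj : j ∉ S) : fRew β P R S j = 0 := by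
  have h : (1 - β) * fRew β P R S j = 0 :=
    calc (1 - β) * fRew β P R S j
      _ = (1 - β) * ((1 : Matrix N N ℝ) *ᵥ fRew β P R S) j := by rw [one_mulVec]
      _ = BMat β P S j ⬝ᵥ fRew β P R S := by
        rw [BMat_row_of_notMem hj, smul_dotProduct, smul_eq_mul, mulVec]
      _ = 0 := (congrFun (BMat_mulVec_fRew hB) j).trans (if_neg hj)
  exact (mul_eq_zero.1 h).resolve_left (sub_ne_zero.2 (ne_one_of_isUnit_BMat hB hj).symm)

theorem sum_mul_fRew_eq_dotProduct (hB : IsUnit (BMat β P S)) (v : N → ℝ) :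
    ∑ k ∈ S, v k * fRew β P R S k = v ⬝ᵥ fRew β P R S :=
  Finset.sum_subset (Finset.subset_univ S) fun k _ hk => by
    rw [fRew_eq_zero_of_notMem hB hk, mul_zero]

theorem one_sub_smul_fRew (hB : IsUnit (BMat β P S)) :
    (1 - β) • fRew β P R S = fun j => if j ∈ S then rMarg β P R S j else 0 := by
  funext j
  by_cases hj : j ∈ S
  · simp only [rMarg, if_pos hj, Pi.smul_apply, smul_eq_mul]
  · simp only [if_neg hj, Pi.smul_apply, fRew_eq_zero_of_notMem hB hj, smul_zero]

theorem sub_one_sub_smul_mulVec_fRew (hB : IsUnit (BMat β P S)) :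
    R - (1 - β • P) *ᵥ fRew β P R S = fun j => if j ∈ Sᶜ then rMarg β P R S j else 0 := by
  funext j
  by_cases hj : j ∈ S
  · simp only [Pi.sub_apply, one_sub_smul_mulVec_fRew_of_mem hB hj, sub_self, Finset.mem_compl,
      hj, not_true_eq_false, if_false]
  · have h : ((1 - β • P) *ᵥ fRew β P R S) j = -(β * (P j ⬝ᵥ fRew β P R S)) := by
      rw [sub_mulVec, one_mulVec, smul_mulVec, Pi.sub_apply, fRew_eq_zero_of_notMem hB hj, zero_sub,
        Pi.smul_apply, smul_eq_mul, mulVec]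
    simp only [Pi.sub_apply, h, sub_neg_eq_add, Finset.mem_compl, hj, not_false_eq_true, if_true,
      rMarg, if_false, sum_mul_fRew_eq_dotProduct hB]

theorem dotProduct_eq_dotProduct_fRew_sub_sum_add_sum {p x0 x1 : N → ℝ} (hB : IsUnit (BMat β P S))
    (hx : (1 - β) • x0 + x1 ᵥ* (1 - β • P) = p) :
    R ⬝ᵥ x1 = p ⬝ᵥ fRew β P R S - ∑ j ∈ S, rMarg β P R S j * x0 j
      + ∑ j ∈ Sᶜ, rMarg β P R S j * x1 j := by
  set f := fRew β P R S with hf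
  have hbalance : p ⬝ᵥ f = ((1 - β) • f) ⬝ᵥ x0 + ((1 - β • P) *ᵥ f) ⬝ᵥ x1 := by
    rw [← hx, add_dotProduct, smul_dotProduct, ← dotProduct_mulVec, smul_dotProduct,
      dotProduct_comm x0, dotProduct_comm x1]
  calc R ⬝ᵥ x1
    _ = p ⬝ᵥ f - ((1 - β) • f) ⬝ᵥ x0 + (R - (1 - β • P) *ᵥ f) ⬝ᵥ x1 := by
      rw [hbalance, sub_dotProduct]; ring
    _ = p ⬝ᵥ f - ∑ j ∈ S, rMarg β P R S j * x0 j + ∑ j ∈ Sᶜ, rMarg β P R S j * x1 j := by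
      rw [hf, one_sub_smul_fRew hB, sub_one_sub_smul_mulVec_fRew hB, ite_mem_dotProduct,
        ite_mem_dotProduct]

theorem gWork_eq_fRew_one : gWork β P S = fRew β P 1 S := rfl

theorem wMarg_eq_rMarg_one : wMarg β P S = rMarg β P 1 S := rfl

end ActivePolicy

theorem stmt6_general {N : Type*} [Fintype N] [DecidableEq N] {P : Matrix N N ℝ} {β : ℝ}
    {S : Finset N} (hB : IsUnit (BMat β P S)) (R : N → ℝ) (ν : ℝ) {p x0 x1 : N → ℝ}
    (hx : (1 - β) • x0 + x1 ᵥ* (1 - β • P) = p) :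
    ∑ j, (R j - ν) * x1 j
      = p ⬝ᵥ fRew β P R S - ν * (p ⬝ᵥ gWork β P S)
        - ∑ j ∈ S, (rMarg β P R S j - ν * wMarg β P S j) * x0 j
        + ∑ j ∈ Sᶜ, (rMarg β P R S j - ν * wMarg β P S j) * x1 j := by
  have hobjective : ∑ j, (R j - ν) * x1 j = R ⬝ᵥ x1 - ν * (1 ⬝ᵥ x1) := by
    simp only [dotProduct, sub_mul, Finset.sum_sub_distrib, Finset.mul_sum, Pi.one_apply, one_mul]
  rw [hobjective, dotProduct_eq_dotProduct_fRew_sub_sum_add_sum (R := R) hB hx,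
    dotProduct_eq_dotProduct_fRew_sub_sum_add_sum (R := 1) hB hx, gWork_eq_fRew_one,
    wMarg_eq_rMarg_one]
  simp only [sub_mul, mul_assoc, Finset.sum_sub_distrib, ← Finset.mul_sum]
  ring

/-- Proposition 3(c): decomposition of the ν-charge objective relative
to the S-active policy. -/
theorem stmt6 {N : Type*} [Fintype N] [DecidableEq N] [Nonempty N]
    (P : Matrix N N ℝ) (hP0 : ∀ i j, 0 ≤ P i j) (hP1 : ∀ i, ∑ j, P i j = 1)
    (β : ℝ) (hβ0 : 0 < β) (hβ1 : β < 1)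
    (R : N → ℝ) (ν : ℝ) (S : Finset N) (i : N) (x0 x1 : N → ℝ)
    (hx : Feasible β P i x0 x1) :
    ∑ j, (R j - ν) * x1 j
      = fRew β P R S i - ν * gWork β P S i
        - ∑ j ∈ S, (rMarg β P R S j - ν * wMarg β P S j) * x0 j
        + ∑ j ∈ Sᶜ, (rMarg β P R S j - ν * wMarg β P S j) * x1 j := by
  have hP : P ∈ rowStochastic ℝ N := mem_rowStochastic_iff_sum.2 ⟨hP0, hP1⟩
  have hB := isUnit_BMat_of_mem_rowStochastic hP (abs_lt.2 ⟨by linarith, hβ1⟩) S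
  simpa only [single_dotProduct, one_mul] using stmt6_general hB R ν hx.2.2
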